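/- For any irrational α ∈ [0,1], Shulga's algorithm applied to α takes infinitely many steps, the Shulga sequences satisfy b_n → ∞ and c_n → ∞ as n → ∞, and consequently both β = [0;b_1,b_2,…] and γ = [0;c_1,c_2,…] belong to G. -/

import Mathlib

/-!
Write `q ≥ q'` and `r ≥ r'` for the last two denominators of `[0; b₁, …, bₙ]` and `[0; c₁, …, cₙ]`.
The algorithm is reduced to an autonomous dynamical system on three real numbers `V, φ, κ`, where
`V = (r + φ r') / q`, `φ` is the fractional part discarded when `cₙ` is computed, and `1 / κ` is the
amount `θ` by which rounding up has increased `bₙ`. With `T = V / φ`, the two convergents miss `α`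
by exactly `1 / (r q T)` (the field `err` of `Link`), and a computation gives the complete quotients
from which the next digits are read off:

* `z = T V - κ` for `b = ⌊z⌋ + 1`, with `θ = b - z`;
* `w = V⁺ T + 1 / φ` for `c = ⌊w⌋`, where `V⁺ = T / θ`, `φ⁺ = w - c`, `κ⁺ = 1 / θ`.

The denominators no longer occur. Irrationality of `α` gives `0 < θ, φ < 1`, so
`V < T < V⁺ < T⁺ < ⋯` increases. The algorithm runs as long as `z > 1`, `w > 1`; the first inequality
is preserved by `Stage.Good.next_good`: after the initial stage `z > 1` and `κ > 1` give `T V > 2`,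
whence `T T⁺ > 2 > 1 + θ`, which is `z⁺ > 1`.

If `V` were bounded, then `V, T → L`, `θ → 1`, `κ → 1` and `b = T V - κ + θ → L²`, whereas
`b < T V < L²` because `κ > 1 > θ`. A sequence of integers below `L²` cannot tend to `L²`, so
`V → ∞` (`tendsto_V`). Both digits are bounded below by quantities tending to infinity with `V`.
Finally, a continued fraction with digits `≥ 1` tending to infinity converges to a number with these
partial quotients, hence to an element of `G` (`exists_limit_mem_G`).
-/

noncomputable section

namespace ShulgaPaper

open Filter Topology

/-- The value of the finite continued fraction `[0; a₁, …, aₙ]`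
(the empty continued fraction has value `0`). -/
def cf : List ℕ → ℝ
  | [] => 0
  | a :: l => 1 / ((a : ℝ) + cf l)

/-- Iterates of the Gauss map, starting from the fractional part of `x`. -/
def gaussIter (x : ℝ) : ℕ → ℝ
  | 0 => Int.fract x
  | n + 1 => Int.fract (1 / gaussIter x n)

/-- The `n`-th partial quotient `aₙ(x)` of the continued fraction expansion of `x`
(for `n ≥ 1`; a junk value is returned if it is undefined). -/
def pq (x : ℝ) (n : ℕ) : ℕ := ⌊1 / gaussIter x (n - 1)⌋₊

/-- The `n`-th partial quotient `aₙ(x)` of `x` is defined (`n ≥ 1`), i.e. `n` does not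
exceed the length of the continued fraction expansion of `x`. -/
def pqDefined (x : ℝ) (n : ℕ) : Prop := gaussIter x (n - 1) ≠ 0

/-- The set `G` of real numbers that are rational or whose partial quotients diverge. -/
def G : Set ℝ :=
  {x | (∃ q : ℚ, x = (q : ℝ)) ∨ Tendsto (fun n => pq x n) atTop atTop}

/-- The list of pairs `(b_k, c_k)`, `k = 1, …, n`, produced by (a totalized version of)
Shulga's algorithm applied to `α`. -/
def shulgaList (α : ℝ) : ℕ → List (ℕ × ℕ)
  | 0 => []
  | n + 1 =>
      let L := shulgaList α n
      let b := pq (α - cf (L.map Prod.snd)) (n + 1) + 1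
      let c := pq (α - cf (L.map Prod.fst ++ [b])) (n + 1)
      L ++ [(b, c)]

/-- The list `[b₁, …, bₙ]` of Shulga's algorithm applied to `α`. -/
def bList (α : ℝ) (n : ℕ) : List ℕ := (shulgaList α n).map Prod.fst

/-- The list `[c₁, …, cₙ]` of Shulga's algorithm applied to `α`. -/
def cList (α : ℝ) (n : ℕ) : List ℕ := (shulgaList α n).map Prod.snd

/-- `bₙ` of Shulga's algorithm applied to `α` (for `n ≥ 1`). -/
def shulgaB (α : ℝ) (n : ℕ) : ℕ := ((shulgaList α n).getLast?.getD (0, 0)).1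

/-- `cₙ` of Shulga's algorithm applied to `α` (for `n ≥ 1`). -/
def shulgaC (α : ℝ) (n : ℕ) : ℕ := ((shulgaList α n).getLast?.getD (0, 0)).2

/-- The first `n` steps of Shulga's algorithm applied to `α` are defined: for each step
`k + 1 ≤ n`, the partial quotients `a_{k+1}(α - [0;c₁,…,c_k])` and
`a_{k+1}(α - [0;b₁,…,b_{k+1}])` defining `b_{k+1}` and `c_{k+1}` exist
(in particular the algorithm has not stopped before step `n`). -/
def shulgaDefined (α : ℝ) (n : ℕ) : Prop :=
  ∀ k < n, pqDefined (α - cf (cList α k)) (k + 1) ∧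
    pqDefined (α - cf (bList α (k + 1))) (k + 1)

/-- The half-open interval whose included endpoint is `x` and excluded endpoint is `y`,
the smaller one being the left endpoint. -/
def hIco (x y : ℝ) : Set ℝ := if x ≤ y then Set.Ico x y else Set.Ioc y x

/-- The list `[a 1, …, a n]`. -/
def listOf (a : ℕ → ℕ) (n : ℕ) : List ℕ := (List.range n).map fun i => a (i + 1)

/-- The interval `B_k` determined by the digits `b`, `c` (`k ≥ 1`). -/
def Bset (b c : ℕ → ℕ) (k : ℕ) : Set ℝ :=
  hIco (cf (listOf b (k - 1) ++ [b k - 1]) + cf (listOf c (k - 1)))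
    (cf (listOf b k) + cf (listOf c (k - 1)))

/-- The interval `C_k` determined by the digits `b`, `c` (`k ≥ 1`). -/
def Cset (b c : ℕ → ℕ) (k : ℕ) : Set ℝ :=
  hIco (cf (listOf c k) + cf (listOf b k))
    (cf (listOf c (k - 1) ++ [c k + 1]) + cf (listOf b k))

/-- `A₀ = [0,1]` and `Aₙ = ⋂_{k=1}^{n} (B_k ∩ C_k)` for `n ≥ 1`. -/
def Aset (b c : ℕ → ℕ) : ℕ → Set ℝ
  | 0 => Set.Icc 0 1
  | n + 1 => ⋂ k ∈ Finset.Icc 1 (n + 1), (Bset b c k ∩ Cset b c k)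

/-- The denominators of the convergents of `[0; a 1, a 2, …]`:
`q₀ = 1`, `q₁ = a 1`, `q_k = a k * q_{k-1} + q_{k-2}`. -/
def qden (a : ℕ → ℕ) : ℕ → ℕ
  | 0 => 1
  | 1 => a 1
  | n + 2 => a (n + 2) * qden a (n + 1) + qden a n

/-! ### Continued fractions with a real tail -/

/-- The continued fraction `[0; a₁, …, aₙ + t]`, with a real tail `t`. -/
def cfT : List ℕ → ℝ → ℝ
  | [], t => t
  | a :: l, t => 1 / ((a : ℝ) + cfT l t)

lemma cf_eq_cfT (l : List ℕ) : cf l = cfT l 0 := by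
  induction l with
  | nil => rfl
  | cons a l ih => simp [cf, cfT, ih]

lemma cfT_append (l : List ℕ) (a : ℕ) (t : ℝ) :
    cfT (l ++ [a]) t = cfT l (1 / ((a : ℝ) + t)) := by
  induction l with
  | nil => rfl
  | cons b l ih => simp [cfT] at ih ⊢; rw [ih]

lemma cfT_nonneg (l : List ℕ) {t : ℝ} (ht : 0 ≤ t) : 0 ≤ cfT l t := by
  induction l with
  | nil => exact ht
  | cons a l ih => simp only [cfT]; positivity

lemma cfT_pos {l : List ℕ} (hl : ∀ a ∈ l, 1 ≤ a) {t : ℝ} (ht : 0 < t) : 0 < cfT l t := by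
  cases l with
  | nil => exact ht
  | cons a l =>
    have h1 : (1 : ℝ) ≤ a := by exact_mod_cast hl a (by simp)
    have := cfT_nonneg l ht.le
    simp only [cfT]; positivity

lemma cfT_inj {l : List ℕ} (hl : ∀ a ∈ l, 1 ≤ a) {t s : ℝ} (ht : 0 ≤ t) (hs : 0 ≤ s)
    (h : cfT l t = cfT l s) : t = s := by
  induction l with
  | nil => exact h
  | cons a l ih =>
    have h1 : (1 : ℝ) ≤ a := by exact_mod_cast hl a (by simp)
    have := cfT_nonneg l ht
    have := cfT_nonneg l hs
    refine ih (fun x hx => hl x (by simp [hx])) ?_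
    simp only [cfT, one_div] at h
    have := inv_injective h
    linarith

lemma abs_cfT_sub_le {l : List ℕ} (hl : ∀ a ∈ l, 1 ≤ a) {t s : ℝ} (ht : 0 ≤ t) (hs : 0 ≤ s) :
    |cfT l t - cfT l s| ≤ |t - s| := by
  induction l with
  | nil => exact le_rfl
  | cons a l ih =>
    have h1 : (1 : ℝ) ≤ a := by exact_mod_cast hl a (by simp)
    have h2 := cfT_nonneg l ht
    have h3 := cfT_nonneg l hs
    refine le_trans ?_ (ih (fun x hx => hl x (by simp [hx])))
    simp only [cfT]
    rw [div_sub_div _ _ (by positivity) (by positivity), abs_div,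
      abs_of_pos (a := (a + cfT l t) * (a + cfT l s)) (by positivity)]
    have e : 1 * (a + cfT l s) - (a + cfT l t) * 1 = -(cfT l t - cfT l s) := by ring
    rw [e, abs_neg]
    apply div_le_self (abs_nonneg _)
    nlinarith

lemma exists_rat_cfT (l : List ℕ) (t : ℚ) : ∃ q : ℚ, cfT l (t : ℝ) = q := by
  induction l with
  | nil => exact ⟨t, rfl⟩
  | cons a l ih =>
    obtain ⟨q, hq⟩ := ih
    exact ⟨1 / (a + q), by simp [cfT, hq]⟩

lemma exists_rat_cf (l : List ℕ) : ∃ q : ℚ, cf l = q := by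
  have := exists_rat_cfT l 0
  rwa [Rat.cast_zero, ← cf_eq_cfT] at this

/-! ### The Gauss map -/

lemma gaussIter_succ' (x : ℝ) (n : ℕ) :
    gaussIter x (n + 1) = gaussIter (1 / Int.fract x) n := by
  induction n with
  | zero => rfl
  | succ n ih => rw [gaussIter, ih]; rfl

lemma gaussIter_congr {x y : ℝ} (h : Int.fract x = Int.fract y) (n : ℕ) :
    gaussIter x n = gaussIter y n := by
  induction n with
  | zero => exact h
  | succ n ih => rw [gaussIter, gaussIter, ih]

/-- The Gauss map removes the leading digits of a continued fraction one at a time. -/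
lemma gaussIter_cfT {l : List ℕ} (hl : ∀ a ∈ l, 1 ≤ a) {t : ℝ} (ht : 0 < t) (ht1 : t < 1) :
    gaussIter (cfT l t) l.length = t := by
  induction l with
  | nil => exact Int.fract_eq_self.2 ⟨ht.le, ht1⟩
  | cons a l ih =>
    have h1 : (1 : ℝ) ≤ a := by exact_mod_cast hl a (by simp)
    have hl' : ∀ a ∈ l, 1 ≤ a := fun x hx => hl x (by simp [hx])
    have h2 := cfT_pos hl' ht
    rw [List.length_cons, gaussIter_succ', cfT]
    have h3 : Int.fract (1 / ((a : ℝ) + cfT l t)) = 1 / (a + cfT l t) := by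
      refine Int.fract_eq_self.2 ⟨by positivity, ?_⟩
      rw [div_lt_one (by positivity)]; linarith
    rw [h3, one_div_one_div, gaussIter_congr (y := cfT l t), ih hl']
    exact Int.fract_natCast_add _ _

/-! ### Continued fractions with divergent digits lie in `G` -/

/-- Digits `a 0, a 1, … ≥ 1` tending to infinity define a convergent continued fraction with
exactly these partial quotients. The value `β` is found in the intersection of the nested compact
cylinders `{[0; a 0, …, a (n-1) + t] : 0 ≤ t ≤ 1}`. -/
lemma exists_limit_mem_G (a : ℕ → ℕ) (l : ℕ → List ℕ) (h0 : l 0 = [])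
    (hs : ∀ n, l (n + 1) = l n ++ [a n]) (ha : ∀ n, 1 ≤ a n) (hlim : Tendsto a atTop atTop) :
    ∃ β : ℝ, Tendsto (fun n => cf (l n)) atTop (𝓝 β) ∧ β ∈ G := by
  have hl : ∀ n, ∀ x ∈ l n, 1 ≤ x := by
    intro n
    induction n with
    | zero => simp [h0]
    | succ n ih =>
      intro x hx
      rw [hs, List.mem_append, List.mem_singleton] at hx
      rcases hx with hx | rfl
      exacts [ih x hx, ha n]
  have hlen : ∀ n, (l n).length = n := by
    intro n
    induction n with
    | zero => simp [h0]
    | succ n ih => simp [hs, ih]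
  have ha' : ∀ n, (1 : ℝ) ≤ a n := fun n => by exact_mod_cast ha n
  have hcomp : ∀ n, IsCompact (cfT (l n) '' Set.Icc 0 1) := by
    intro n
    refine isCompact_Icc.image_of_continuousOn ?_
    have : LipschitzOnWith 1 (cfT (l n)) (Set.Icc 0 1) :=
      LipschitzOnWith.of_dist_le_mul fun x hx y hy => by
        simpa [Real.dist_eq] using abs_cfT_sub_le (hl n) hx.1 hy.1
    exact this.continuousOn
  have hne : (⋂ n, cfT (l n) '' Set.Icc 0 1).Nonempty := by
    refine IsCompact.nonempty_iInter_of_sequence_nonempty_isCompact_isClosed _ ?_ ?_ (hcomp 0)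
      (fun n => (hcomp n).isClosed)
    · rintro n _ ⟨t, ht, rfl⟩
      have := ha' n
      have := ht.1
      refine ⟨1 / (a n + t), ⟨by positivity, ?_⟩, ?_⟩
      · rw [div_le_one (by positivity)]; linarith
      · rw [hs, cfT_append]
    · intro n
      exact ⟨_, 0, by simp, rfl⟩
  obtain ⟨β, hβ⟩ := hne
  rw [Set.mem_iInter] at hβ
  choose t ht htβ using hβ
  -- The tails of `β` satisfy the recursion of a continued fraction.
  have hrec : ∀ n, t n = 1 / (a n + t (n + 1)) := by
    intro n
    have := ha' n
    have := (ht (n + 1)).1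
    refine cfT_inj (hl n) (ht n).1 (by positivity) ?_
    rw [← cfT_append, ← hs, htβ, htβ]
  have hpos : ∀ n, 0 < t n := by
    intro n
    have := ha' n
    have := (ht (n + 1)).1
    rw [hrec]; positivity
  have hlt : ∀ n, t n < 1 := by
    intro n
    have := ha' n
    have := hpos (n + 1)
    rw [hrec, div_lt_one (by positivity)]; linarith
  have hpq : ∀ n, pq β (n + 1) = a n := by
    intro n
    have h1 : gaussIter β n = t n := by
      have := gaussIter_cfT (hl n) (hpos n) (hlt n)
      rwa [htβ, hlen] at this
    rw [pq, Nat.add_sub_cancel, h1, hrec, one_div_one_div]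
    rw [Nat.floor_eq_iff (by have := ha' n; have := hpos (n + 1); positivity)]
    exact ⟨by linarith [hpos (n + 1)], by linarith [hlt (n + 1)]⟩
  refine ⟨β, ?_, Or.inr ?_⟩
  · have hz : Tendsto (fun n => 1 / (a n : ℝ)) atTop (𝓝 0) := by
      simp only [one_div]
      exact (tendsto_natCast_atTop_atTop.comp hlim).inv_tendsto_atTop
    rw [tendsto_iff_norm_sub_tendsto_zero]
    refine squeeze_zero (fun n => norm_nonneg _) (fun n => ?_) hz
    rw [cf_eq_cfT, ← htβ n, Real.norm_eq_abs]
    refine (abs_cfT_sub_le (hl n) le_rfl (ht n).1).trans ?_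
    rw [zero_sub, abs_neg, abs_of_pos (hpos n), hrec]
    have := ha' n
    exact one_div_le_one_div_of_le (by positivity) (by linarith [hpos (n + 1)])
  · rw [← tendsto_add_atTop_iff_nat 1]
    simpa only [hpq] using hlim

/-! ### Convergents -/

/-- `t ↦ cfT l t` is the Möbius map `t ↦ (p + t p') / (q + t q')`; here `p / q` and `p' / q'`
are the last and the last but one convergent of the continued fraction with digits `l`. -/
structure IsMob (l : List ℕ) (p p' q q' : ℝ) : Prop where
  q_pos : 0 < q
  q'_nonneg : 0 ≤ q'
  det : p' * q - p * q' = (-1) ^ l.length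
  eval : ∀ t, 0 ≤ t → cfT l t = (p + t * p') / (q + t * q')

lemma isMob_nil : IsMob [] 0 1 1 0 :=
  ⟨one_pos, le_rfl, by simp, fun t _ => by simp [cfT]⟩

lemma IsMob.append {l : List ℕ} {p p' q q' : ℝ} (h : IsMob l p p' q q') {a : ℕ} (ha : 1 ≤ a) :
    IsMob (l ++ [a]) (a * p + p') p (a * q + q') q := by
  have h1 : (1 : ℝ) ≤ a := by exact_mod_cast ha
  have h2 := h.q_pos
  have h3 := h.q'_nonneg
  refine ⟨by positivity, h2.le, ?_, fun t ht => ?_⟩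
  · rw [List.length_append, List.length_singleton, pow_succ, ← h.det]; ring
  · rw [cfT_append, h.eval _ (by positivity)]
    rw [div_eq_div_iff (by positivity) (by positivity)]
    field_simp
    ring

lemma IsMob.cf_eq {l : List ℕ} {p p' q q' : ℝ} (h : IsMob l p p' q q') : cf l = p / q := by
  rw [cf_eq_cfT, h.eval 0 le_rfl]; simp

/-- The tail `t = 1 / z` written as a displacement from the convergent. -/
lemma IsMob.cfT_inv {l : List ℕ} {p p' q q' z : ℝ} (h : IsMob l p p' q q') (hz : 0 < z) :
    cfT l (1 / z) = cf l + (-1) ^ l.length / (q * (q * z + q')) := by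
  have h2 := h.q_pos
  have h3 := h.q'_nonneg
  rw [h.cf_eq, h.eval _ (by positivity), ← h.det]
  field_simp
  ring

/-! ### The renormalised dynamics -/

/-- The state of the algorithm after `n` steps. If `q`, `q'` are the last two denominators of
`[0; b₁, …, bₙ]` and `r`, `r'` those of `[0; c₁, …, cₙ]`, then `φ` is the fractional part left over
when `cₙ` is computed, `V = (r + φ r') / q`, and `κ = (V r' + q') / q`; for `n ≥ 1`, `1 / κ` is the
difference of `bₙ` and the complete quotient from which it is computed. Every later quantity of
the algorithm depends on `(V, φ, κ)` only; the denominators drop out. -/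
structure Stage where
  V : ℝ
  φ : ℝ
  κ : ℝ

namespace Stage

/-- The quantity interleaving consecutive values of `V`; the error
`|α - [0; b₁, …, bₙ] - [0; c₁, …, cₙ]|` is `1 / (r q T)`. -/
def T (s : Stage) : ℝ := s.V / s.φ

/-- The complete quotient of `α - [0; c₁, …, cₙ]` after the digits `b₁, …, bₙ`. -/
def z (s : Stage) : ℝ := s.T * s.V - s.κ

/-- The next digit of `β`. -/
def b (s : Stage) : ℕ := ⌊s.z⌋₊ + 1

/-- The amount by which the next digit of `β` exceeds the complete quotient `z`. -/
def θ (s : Stage) : ℝ := s.b - s.z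

/-- The complete quotient of `α - [0; b₁, …, bₙ₊₁]` after the digits `c₁, …, cₙ`. -/
def w (s : Stage) : ℝ := s.T / s.θ * s.T + 1 / s.φ

/-- The next digit of `γ`. -/
def c (s : Stage) : ℕ := ⌊s.w⌋₊

/-- One step of the algorithm. -/
def next (s : Stage) : Stage := ⟨s.T / s.θ, s.w - s.c, 1 / s.θ⟩

/-- The inequalities preserved by the algorithm. The last clause separates the initial stage from
the later ones. -/
structure Good (s : Stage) : Prop where
  V_ge : 1 ≤ s.V
  φ_pos : 0 < s.φ
  φ_lt : s.φ < 1
  κ_le : s.κ ≤ s.V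
  z_gt : 1 < s.z
  start : 1 < s.κ ∨ (s.V = 1 ∧ s.κ = 0)

variable {s : Stage}

lemma Good.V_lt_T (h : s.Good) : s.V < s.T := by
  have := h.V_ge; have := h.φ_pos; have := h.φ_lt
  rw [T, lt_div_iff₀ h.φ_pos]; nlinarith

lemma Good.φ_mul_T (h : s.Good) : s.φ * s.T = s.V := by
  rw [T, mul_div_cancel₀ _ h.φ_pos.ne']

lemma θ_pos (s : Stage) : 0 < s.θ := by
  have := Nat.lt_floor_add_one s.z
  rw [θ, b]; push_cast; linarith

lemma Good.θ_lt (h : s.Good) (hz : ∀ m : ℕ, s.z ≠ m) : s.θ < 1 := by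
  have h1 := Nat.floor_le (zero_le_one.trans h.z_gt.le)
  have h2 := lt_of_le_of_ne h1 (hz _).symm
  rw [θ, b]; push_cast; linarith

lemma Good.w_gt (h : s.Good) : s.T / s.θ * s.T + 1 < s.w := by
  have := one_lt_one_div h.φ_pos h.φ_lt
  rw [w]; linarith

lemma Good.T_gt (h : s.Good) : 1 < s.T := h.V_ge.trans_lt h.V_lt_T

lemma Good.one_lt_w (h : s.Good) : 1 < s.w := by
  have := h.w_gt; have := s.θ_pos; have := h.T_gt
  have : 0 ≤ s.T / s.θ * s.T := by positivity
  linarith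

lemma Good.T_lt_next_V (h : s.Good) (hz : ∀ m : ℕ, s.z ≠ m) : s.T < s.next.V := by
  have hθ := s.θ_pos
  have hθ1 := h.θ_lt hz
  have hT := h.T_gt
  simp only [next]; rw [lt_div_iff₀ hθ]; nlinarith

lemma Good.next_φ_pos (h : s.Good) (hw : ∀ m : ℕ, s.w ≠ m) : 0 < s.next.φ := by
  have hc := Nat.floor_le (zero_le_one.trans h.one_lt_w.le)
  have hc2 := lt_of_le_of_ne hc (hw _).symm
  simp only [next, c]; linarith

lemma next_φ_lt (s : Stage) : s.next.φ < 1 := by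
  have := Nat.lt_floor_add_one s.w
  simp only [next, c]; linarith

lemma w_eq (s : Stage) : s.w = s.next.V * s.T + 1 / s.φ := rfl

lemma next_φ_eq (s : Stage) : s.next.φ = s.w - s.c := rfl

/-- The inequality that gives `z > 1` at the next stage (see `Good.next_good`). After the initial
stage it holds because `V T > 1 + κ > 2`. -/
lemma Good.next_bound_of_κ (h : s.Good) (hz : ∀ m : ℕ, s.z ≠ m) (hw : ∀ m : ℕ, s.w ≠ m)
    (hκ : 1 < s.κ) : (1 + s.θ) * s.next.φ < s.T * s.next.V := by
  have hθ1 := h.θ_lt hz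
  have hT := h.T_gt
  have hψ := h.next_φ_pos hw
  have hVn := h.T_lt_next_V hz
  have h1 : 2 < s.T * s.V := by have := h.z_gt; rw [z] at this; linarith
  have h2 : s.T * s.V < s.T * s.next.V := by gcongr; linarith [h.V_lt_T]
  have h3 : (1 + s.θ) * s.next.φ < 2 * s.next.φ := by gcongr; linarith
  linarith [s.next_φ_lt]

/-- The inequality that gives `z > 1` at the next stage (see `Good.next_good`), for the initial
stage with `T < 2`. Then the first digit of `β` is `2`, which forces the first digit of `γ` to be
at least `2`. -/
lemma Good.next_bound_of_start (h : s.Good) (hw : ∀ m : ℕ, s.w ≠ m)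
    (hT2 : s.T < 2) (hV1 : s.V = 1) (hκ0 : s.κ = 0) :
    (1 + s.θ) * s.next.φ < s.T * s.next.V := by
  have hθ := s.θ_pos
  have hT := h.T_gt
  have hψ := h.next_φ_pos hw
  have hψ1 := s.next_φ_lt
  have hnV : s.next.V * s.θ = s.T := by simp only [next]; field_simp
  have hzT : s.z = s.T := by rw [z, hV1, hκ0]; ring
  have hb : s.b = 2 := by
    have : ⌊s.z⌋₊ = 1 := by
      rw [Nat.floor_eq_iff (by linarith [h.z_gt])]
      rw [hzT]; constructor <;> push_cast <;> linarith
    rw [b, this]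
  have hθe : s.θ = 2 - s.T := by rw [θ, hb, hzT]; norm_num
  have hφT : 1 / s.φ = s.T := by rw [T, hV1]
  have h5 : s.w * s.θ = 2 * s.T := by
    rw [w_eq, hφT, add_mul, mul_right_comm, hnV, hθe]; ring
  have h2 : 2 ≤ s.c := by
    apply Nat.le_floor
    push_cast
    refine le_of_mul_le_mul_right ?_ hθ
    rw [h5]; linarith
  have h3 : (2 : ℝ) ≤ s.c := by exact_mod_cast h2
  have h4 : 2 * s.θ ≤ s.c * s.θ := by gcongr
  -- `φ' θ` is bounded by `2 - T` because `φ' < 1` and by `4 T - 4` because `c ≥ 2`.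
  have hx1 : s.next.φ * s.θ < 2 - s.T := by
    rw [← hθe]; exact mul_lt_of_lt_one_left hθ hψ1
  have hx2 : s.next.φ * s.θ ≤ 4 * s.T - 4 := by
    rw [next_φ_eq, sub_mul, h5]; linarith
  have hx3 : (3 - s.T) * (s.next.φ * s.θ) < s.T ^ 2 := by
    rcases lt_or_ge s.T (6 / 5) with h6 | h6
    · have : (3 - s.T) * (s.next.φ * s.θ) ≤ (3 - s.T) * (4 * s.T - 4) := by
        gcongr; linarith
      nlinarith
    · have : (3 - s.T) * (s.next.φ * s.θ) < (3 - s.T) * (2 - s.T) := by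
        gcongr; linarith
      nlinarith
  refine lt_of_mul_lt_mul_right (a := s.θ) ?_ hθ.le
  have e1 : ((1 + s.θ) * s.next.φ) * s.θ = (3 - s.T) * (s.next.φ * s.θ) := by
    rw [mul_assoc]; congr 1; linarith
  have e2 : (s.T * s.next.V) * s.θ = s.T ^ 2 := by rw [mul_assoc, hnV]; ring
  rw [e1, e2]; exact hx3

/-- The inequalities survive a step, as long as the complete quotients `z` and `w` are not
integers. -/
lemma Good.next_good (h : s.Good) (hz : ∀ m : ℕ, s.z ≠ m) (hw : ∀ m : ℕ, s.w ≠ m) :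
    s.next.Good := by
  have hθ := s.θ_pos
  have hθ1 := h.θ_lt hz
  have hT := h.T_gt
  have hψ := h.next_φ_pos hw
  have hψ1 := s.next_φ_lt
  have hVn := h.T_lt_next_V hz
  refine ⟨by linarith, hψ, hψ1, ?_, ?_, Or.inl (one_lt_one_div hθ hθ1)⟩
  · simp only [next]; gcongr
  -- The condition `z > 1` of the next stage is `T * T' > 1 + θ` with `T' = s.next.T`.
  suffices H : (1 + s.θ) * s.next.φ < s.T * s.next.V by
    have e : s.next.z = (s.T * s.next.V / s.next.φ - 1) / s.θ := by
      have h1 : s.next.κ = 1 / s.θ := rfl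
      have h2 : s.next.V = s.T / s.θ := rfl
      rw [z, T, h1, h2]
      field_simp
    rw [e, lt_div_iff₀ hθ]
    have : 1 + s.θ < s.T * s.next.V / s.next.φ := by rwa [lt_div_iff₀ hψ]
    linarith
  rcases lt_or_ge s.T 2 with hT2 | hT2
  · rcases h.start with hκ | ⟨hV1, hκ0⟩
    · exact h.next_bound_of_κ hz hw hκ
    · exact h.next_bound_of_start hw hT2 hV1 hκ0
  · have h1 : (1 + s.θ) * s.next.φ < 2 * 1 := by gcongr; linarith
    nlinarith

end Stage

/-! ### Divergence of the renormalised dynamics -/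

section Orbit

variable {σ : ℕ → Stage}

/-- If `V` stayed bounded, `V` and `T` would increase to a common limit `L` and `θ` would tend
to `1`, so the integers `b n = T V - κ + θ` would tend to `L ^ 2`. But `κ > 1 > θ`, so
`b n < T V < L ^ 2`, which is impossible for integers. -/
lemma tendsto_V (hG : ∀ n, (σ n).Good) (hσ : ∀ n, σ (n + 1) = (σ n).next)
    (hz : ∀ n, ∀ m : ℕ, (σ n).z ≠ m) : Tendsto (fun n => (σ n).V) atTop atTop := by
  have hTV : ∀ n, (σ n).T < (σ (n + 1)).V := fun n => by
    rw [hσ]; exact (hG n).T_lt_next_V (hz n)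
  have hmono : StrictMono fun n => (σ n).V :=
    strictMono_nat_of_lt_succ fun n => (hG n).V_lt_T.trans (hTV n)
  rcases tendsto_atTop_of_monotone hmono.monotone with h | ⟨L, hL⟩
  · exact h
  exfalso
  have hVL : ∀ n, (σ n).V < L := fun n =>
    (hmono (Nat.lt_succ_self n)).trans_le (hmono.monotone.ge_of_tendsto hL _)
  have hL1 := (tendsto_add_atTop_iff_nat 1).2 hL
  have hTL : Tendsto (fun n => (σ n).T) atTop (𝓝 L) :=
    tendsto_of_tendsto_of_tendsto_of_le_of_le hL hL1 (fun n => (hG n).V_lt_T.le)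
      (fun n => (hTV n).le)
  have hL0 : L ≠ 0 := by have := hVL 0; have := (hG 0).V_ge; linarith
  have hθe : ∀ n, (σ n).θ = (σ n).T / (σ (n + 1)).V := fun n => by
    have h1 : (σ (n + 1)).V = (σ n).T / (σ n).θ := by rw [hσ]; rfl
    have := (σ n).θ_pos
    have := (hG n).T_gt
    rw [h1]; field_simp
  have hθ : Tendsto (fun n => (σ n).θ) atTop (𝓝 1) := by
    simp only [hθe]
    have := hTL.div hL1 hL0
    rwa [div_self hL0] at this
  have hκe : ∀ n, (σ (n + 1)).κ = 1 / (σ n).θ := fun n => by rw [hσ]; rfl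
  have hb : ∀ n, ((σ (n + 1)).b : ℝ)
      = (σ (n + 1)).T * (σ (n + 1)).V - 1 / (σ n).θ + (σ (n + 1)).θ := fun n => by
    rw [← hκe, Stage.θ, Stage.z]; ring
  have hblim : Tendsto (fun n => ((σ (n + 1)).b : ℝ)) atTop (𝓝 (L * L)) := by
    simp only [hb]
    have h1 := (tendsto_add_atTop_iff_nat 1).2 hTL
    have h2 := (tendsto_add_atTop_iff_nat 1).2 hθ
    have h3 := ((h1.mul hL1).sub (hθ.inv₀ one_ne_zero)).add h2
    simpa only [one_div, inv_one, sub_add_cancel] using h3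
  have hblt : ∀ n, ((σ (n + 1)).b : ℝ) < L * L := fun n => by
    have h1 := one_lt_one_div (σ n).θ_pos ((hG n).θ_lt (hz n))
    have h2 := (hG (n + 1)).θ_lt (hz (n + 1))
    have h3 : (σ (n + 1)).T * (σ (n + 1)).V < L * L := by
      have := (hG (n + 1)).V_ge
      have := hVL (n + 1)
      have := hTV (n + 1)
      have := hVL (n + 1 + 1)
      have := (hG (n + 1)).T_gt
      apply mul_lt_mul'' <;> linarith
    rw [hb]; linarith
  have hceil : ∀ n, ((σ (n + 1)).b : ℝ) ≤ (⌈L * L⌉ - 1 : ℤ) := fun n => by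
    have h1 : ((σ (n + 1)).b : ℤ) < ⌈L * L⌉ := by
      rw [Int.lt_ceil]; exact_mod_cast hblt n
    have h2 : ((σ (n + 1)).b : ℤ) ≤ ⌈L * L⌉ - 1 := by omega
    exact_mod_cast h2
  have := le_of_tendsto' hblim hceil
  have h2 := Int.ceil_lt_add_one (L * L)
  push_cast at this
  linarith

lemma tendsto_b (hG : ∀ n, (σ n).Good) (hV : Tendsto (fun n => (σ n).V) atTop atTop) :
    Tendsto (fun n => (σ n).b) atTop atTop := by
  rw [← tendsto_natCast_atTop_iff (R := ℝ)]
  have h1 : Tendsto (fun n => (σ n).V - 1) atTop atTop := tendsto_atTop_add_const_right _ _ hV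
  refine tendsto_atTop_mono (fun n => ?_) h1
  have h2 := (σ n).θ_pos
  rw [Stage.θ, Stage.z] at h2
  have := (hG n).V_lt_T
  have := (hG n).V_ge
  have := (hG n).κ_le
  nlinarith

lemma tendsto_c (hG : ∀ n, (σ n).Good) (hz : ∀ n, ∀ m : ℕ, (σ n).z ≠ m)
    (hV : Tendsto (fun n => (σ n).V) atTop atTop) :
    Tendsto (fun n => (σ n).c) atTop atTop := by
  rw [← tendsto_natCast_atTop_iff (R := ℝ)]
  refine tendsto_atTop_mono (fun n => ?_) hV
  have h1 := (σ n).next_φ_lt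
  rw [Stage.next_φ_eq] at h1
  have h2 : (σ n).next.V * (σ n).T + 1 < (σ n).w := (hG n).w_gt
  have := (hG n).V_lt_T
  have := (hG n).V_ge
  have := (hG n).T_lt_next_V (hz n)
  nlinarith

end Orbit

/-! ### The algorithm follows the renormalised dynamics -/

lemma bList_succ (α : ℝ) (n : ℕ) :
    bList α (n + 1) = bList α n ++ [pq (α - cf (cList α n)) (n + 1) + 1] := by
  simp [bList, cList, shulgaList]

lemma cList_succ (α : ℝ) (n : ℕ) :
    cList α (n + 1) = cList α n ++ [pq (α - cf (bList α (n + 1))) (n + 1)] := by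
  rw [bList_succ]
  simp [bList, cList, shulgaList]

lemma shulgaB_succ (α : ℝ) (n : ℕ) :
    shulgaB α (n + 1) = pq (α - cf (cList α n)) (n + 1) + 1 := by
  simp [shulgaB, cList, shulgaList]

lemma shulgaC_succ (α : ℝ) (n : ℕ) :
    shulgaC α (n + 1) = pq (α - cf (bList α (n + 1))) (n + 1) := by
  rw [bList_succ]
  simp [shulgaC, bList, cList, shulgaList]

/-- The stages of the algorithm applied to `α`. At the start `q = r = 1` and `q' = r' = 0`, so
`V = 1` and `κ = 0`; the value `φ = α` makes the initial error `1 / (r q T)` equal to `α`. -/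
def orbit (α : ℝ) : ℕ → Stage
  | 0 => ⟨1, α, 0⟩
  | n + 1 => (orbit α n).next

/-- The stage `s` describes the situation in which the digit lists `l` and `m` have been produced
from `α` in `n` steps. The field `err` says that the two convergents miss `α` by `1 / (r q T)`, with
a sign alternating in `n`. -/
structure Link (α : ℝ) (s : Stage) (n : ℕ) (l m : List ℕ) (p p' q q' u u' r r' : ℝ) : Prop where
  good : s.Good
  len_l : l.length = n
  len_m : m.length = n
  pos_l : ∀ a ∈ l, 1 ≤ a
  pos_m : ∀ a ∈ m, 1 ≤ a
  mob_l : IsMob l p p' q q'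
  mob_m : IsMob m u u' r r'
  V_eq : s.V * q = r + s.φ * r'
  κ_eq : s.κ * q = s.V * r' + q'
  err : α = cf l + cf m + (-1) ^ n / (r * q * s.T)

section Step

variable {p p' q q' u u' r r' : ℝ} {α : ℝ} {s : Stage} {n : ℕ} {l m : List ℕ}

/-- Complete quotients of `α - [0; m]` are not integers, since `α` is irrational. -/
lemma ne_natCast_of_eq (hirr : Irrational α) {x : ℝ} (h : α - cf m = cfT l (1 / x)) (k : ℕ) :
    x ≠ k := by
  rintro rfl
  obtain ⟨a, ha⟩ := exists_rat_cf m
  obtain ⟨b, hb⟩ := exists_rat_cfT l (1 / (k : ℚ))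
  push_cast at hb
  refine hirr ⟨a + b, ?_⟩
  push_cast
  rw [← ha, ← hb, ← h]; ring

/-- If `y = [0; l₁, …, lₙ + 1 / x]` with `x > 1`, then the next partial quotient of `y` is `⌊x⌋`. -/
lemma pq_of_eq (hl : ∀ a ∈ l, 1 ≤ a) (hlen : l.length = n) {y x : ℝ} (hx : 1 < x)
    (h : y = cfT l (1 / x)) : pqDefined y (n + 1) ∧ pq y (n + 1) = ⌊x⌋₊ := by
  have h1 : gaussIter y n = 1 / x := by
    rw [h, ← hlen]
    exact gaussIter_cfT hl (by positivity) (by rw [div_lt_one (by positivity)]; exact hx)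
  constructor
  · rw [pqDefined, Nat.add_sub_cancel, h1]; positivity
  · rw [pq, Nat.add_sub_cancel, h1, one_div_one_div]

lemma Link.Tr (h : Link α s n l m p p' q q' u u' r r') : s.T * r = q * s.z + q' := by
  have h1 := h.V_eq
  have h2 := h.κ_eq
  have h3 := h.good.φ_mul_T
  rw [Stage.z]
  linear_combination -r' * h3 + h2 - s.T * h1

/-- `α - [0; c₁, …, cₙ]` starts with the digits `b₁, …, bₙ`, and its next complete quotient is
`z`. -/
lemma Link.z_eq (h : Link α s n l m p p' q q' u u' r r') : α - cf m = cfT l (1 / s.z) := by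
  rw [h.mob_l.cfT_inv (by linarith [h.good.z_gt]), ← h.Tr, h.len_l]
  have := h.err
  rw [show q * (s.T * r) = r * q * s.T by ring]
  linarith

lemma Link.q_next (h : Link α s n l m p p' q q' u u' r r') :
    s.b * q + q' = s.T * r + s.θ * q := by
  rw [h.Tr, Stage.θ]; ring

lemma Link.w_mul (h : Link α s n l m p p' q q' u u' r r') :
    s.next.V * (s.b * q + q') = r * s.w + r' := by
  have h1 : s.next.V * s.θ = s.T := by
    have := s.θ_pos
    simp only [Stage.next]; field_simp
  have h2 : s.T * q = r / s.φ + r' := by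
    have := h.V_eq
    have := h.good.φ_pos
    rw [Stage.T, div_mul_eq_mul_div, h.V_eq]; field_simp
  rw [h.q_next, s.w_eq]
  linear_combination q * h1 + h2

lemma Link.cf_append (h : Link α s n l m p p' q q' u u' r r') {a : ℕ} (ha : 1 ≤ a) :
    cf (l ++ [a]) = cf l + (-1) ^ n / (q * (a * q + q')) := by
  have := h.mob_l.q_pos
  rw [cf_eq_cfT, cfT_append, add_zero, h.mob_l.cfT_inv (by positivity), h.len_l, mul_comm q (a : ℝ)]

/-- The error after the next digit of `β` has been added. -/
lemma Link.err' (h : Link α s n l m p p' q q' u u' r r') :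
    α - cf (l ++ [s.b]) = cf m + (-1) ^ n / (r * (s.b * q + q') * s.next.V) := by
  have hq := h.mob_l.q_pos
  have hq' := h.mob_l.q'_nonneg
  have hr := h.mob_m.q_pos
  have hT := h.good.T_gt
  have hθ := s.θ_pos
  have hb : 1 ≤ s.b := by simp [Stage.b]
  rw [h.cf_append hb]
  have h1 : s.next.V = s.T / s.θ := rfl
  have h2 : (0 : ℝ) < s.b * q + q' := by positivity
  have h3 := h.q_next
  set Q := s.b * q + q'
  have h4 : 1 / (r * q * s.T) - 1 / (q * Q) = 1 / (r * Q * s.next.V) := by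
    rw [h1]
    field_simp
    linarith
  have := h.err
  have h5 : (-1 : ℝ) ^ n / (r * q * s.T) - (-1) ^ n / (q * Q) = (-1) ^ n / (r * Q * s.next.V) := by
    linear_combination (-1 : ℝ) ^ n * h4
  linarith

/-- `α - [0; b₁, …, bₙ₊₁]` starts with the digits `c₁, …, cₙ`, and its next complete quotient is
`w`. -/
lemma Link.w_eq (h : Link α s n l m p p' q q' u u' r r') :
    α - cf (l ++ [s.b]) = cfT m (1 / s.w) := by
  rw [h.mob_m.cfT_inv (by linarith [h.good.one_lt_w]), ← h.w_mul, h.len_m, h.err']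
  congr 2
  ring

lemma Link.next (hirr : Irrational α) (h : Link α s n l m p p' q q' u u' r r') :
    Link α s.next (n + 1) (l ++ [s.b]) (m ++ [s.c])
      (s.b * p + p') p (s.b * q + q') q (s.c * u + u') u (s.c * r + r') r := by
  have hz := ne_natCast_of_eq hirr h.z_eq
  have hw := ne_natCast_of_eq hirr h.w_eq
  have hg := h.good.next_good hz hw
  have hb : 1 ≤ s.b := by simp [Stage.b]
  have hc : 1 ≤ s.c := by
    apply Nat.le_floor
    have := h.good.one_lt_w
    push_cast; linarith
  have hθ := s.θ_pos
  have hm := h.mob_m.append hc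
  have hl := h.mob_l.append hb
  have hV : s.next.V * (s.b * q + q') = s.c * r + r' + s.next.φ * r := by
    rw [h.w_mul, s.next_φ_eq]; ring
  refine ⟨hg, by simp [h.len_l], by simp [h.len_m], ?_, ?_, hl, hm, hV, ?_, ?_⟩
  · intro a ha
    rw [List.mem_append, List.mem_singleton] at ha
    rcases ha with ha | rfl
    exacts [h.pos_l a ha, hb]
  · intro a ha
    rw [List.mem_append, List.mem_singleton] at ha
    rcases ha with ha | rfl
    exacts [h.pos_m a ha, hc]
  · rw [h.q_next]
    simp only [Stage.next]
    field_simp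
  · have h1 := h.err'
    have hr := h.mob_m.q_pos
    have hQ := hl.q_pos
    have hR := hm.q_pos
    have hφ := hg.φ_pos
    have hVp := hg.V_ge
    have h2 : cf (m ++ [s.c]) = cf m + (-1) ^ n / (r * (s.c * r + r')) := by
      rw [cf_eq_cfT, cfT_append, add_zero, h.mob_m.cfT_inv (by positivity), h.len_m,
        mul_comm r (s.c : ℝ)]
    set Q := s.b * q + q'
    set R := s.c * r + r'
    have h3 : 1 / (r * Q * s.next.V) = 1 / (r * R) - 1 / (R * Q * s.next.T) := by
      rw [Stage.T]
      field_simp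
      linarith
    have h4 : (-1 : ℝ) ^ n / (r * Q * s.next.V)
        = (-1) ^ n / (r * R) + (-1) ^ (n + 1) / (R * Q * s.next.T) := by
      rw [pow_succ]
      linear_combination (-1 : ℝ) ^ n * h3
    linarith

end Step

lemma exists_link {α : ℝ} (hα : α ∈ Set.Icc (0 : ℝ) 1) (hirr : Irrational α) (n : ℕ) :
    ∃ p p' q q' u u' r r' : ℝ,
      Link α (orbit α n) n (bList α n) (cList α n) p p' q q' u u' r r' := by
  induction n with
  | zero =>
    have h0 : 0 < α := lt_of_le_of_ne hα.1 (by simpa using (hirr.ne_nat 0).symm)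
    have h1 : α < 1 := lt_of_le_of_ne hα.2 (by simpa using hirr.ne_nat 1)
    refine ⟨0, 1, 1, 0, 0, 1, 1, 0, ⟨le_rfl, h0, h1, by simp [orbit], ?_, Or.inr ⟨rfl, rfl⟩⟩,
      rfl, rfl, by simp [bList, shulgaList], by simp [cList, shulgaList], isMob_nil, isMob_nil,
      by simp [orbit], by simp [orbit], ?_⟩
    · simpa [orbit, Stage.z, Stage.T] using one_lt_one_div h0 h1
    · simp [orbit, Stage.T, bList, cList, shulgaList, cf]
  | succ n ih =>
    obtain ⟨p, p', q, q', u, u', r, r', h⟩ := ih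
    have hb : bList α (n + 1) = bList α n ++ [(orbit α n).b] := by
      rw [bList_succ, (pq_of_eq h.pos_l h.len_l h.good.z_gt h.z_eq).2]; rfl
    have hc : cList α (n + 1) = cList α n ++ [(orbit α n).c] := by
      rw [cList_succ, hb, (pq_of_eq h.pos_m h.len_m h.good.one_lt_w h.w_eq).2]; rfl
    rw [hb, hc]
    exact ⟨_, _, _, _, _, _, _, _, h.next hirr⟩

/-- for irrational `α ∈ [0,1]` the algorithm takes infinitely many steps,
`bₙ → ∞` and `cₙ → ∞`, and `β = [0;b₁,b₂,…]` and `γ = [0;c₁,c₂,…]` belong to `G`. -/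
theorem stmt4 (α : ℝ) (hα : α ∈ Set.Icc (0 : ℝ) 1) (hirr : Irrational α) :
    (∀ n : ℕ, shulgaDefined α n) ∧
    Tendsto (fun n => shulgaB α n) atTop atTop ∧
    Tendsto (fun n => shulgaC α n) atTop atTop ∧
    ∃ β γ : ℝ,
      Tendsto (fun n => cf (bList α n)) atTop (nhds β) ∧
      Tendsto (fun n => cf (cList α n)) atTop (nhds γ) ∧
      β ∈ G ∧ γ ∈ G := by
  have key : ∀ n, (orbit α n).Good ∧ (∀ m : ℕ, (orbit α n).z ≠ m) ∧ 1 ≤ (orbit α n).c ∧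
      pqDefined (α - cf (cList α n)) (n + 1) ∧
      pq (α - cf (cList α n)) (n + 1) + 1 = (orbit α n).b ∧
      pqDefined (α - cf (bList α (n + 1))) (n + 1) ∧
      pq (α - cf (bList α (n + 1))) (n + 1) = (orbit α n).c := by
    intro n
    obtain ⟨p, p', q, q', u, u', r, r', h⟩ := exists_link hα hirr n
    obtain ⟨h1, h2⟩ := pq_of_eq h.pos_l h.len_l h.good.z_gt h.z_eq
    obtain ⟨h3, h4⟩ := pq_of_eq h.pos_m h.len_m h.good.one_lt_w h.w_eq
    have hb : bList α (n + 1) = bList α n ++ [(orbit α n).b] := by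
      rw [bList_succ, h2]; rfl
    rw [← hb] at h3 h4
    exact ⟨h.good, ne_natCast_of_eq hirr h.z_eq,
      Nat.le_floor (by exact_mod_cast h.good.one_lt_w.le), h1, by rw [h2]; rfl, h3, h4⟩
  have hG := fun n => (key n).1
  have hz := fun n => (key n).2.1
  have hV := tendsto_V hG (fun _ => rfl) hz
  have hb := tendsto_b hG hV
  have hc := tendsto_c hG hz hV
  refine ⟨fun n k _ => ⟨(key k).2.2.2.1, (key k).2.2.2.2.2.1⟩, ?_, ?_, ?_⟩
  · rw [← tendsto_add_atTop_iff_nat 1]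
    simpa only [shulgaB_succ, (key _).2.2.2.2.1] using hb
  · rw [← tendsto_add_atTop_iff_nat 1]
    simpa only [shulgaC_succ, (key _).2.2.2.2.2.2] using hc
  · obtain ⟨β, hβ, hβG⟩ := exists_limit_mem_G (fun n => (orbit α n).b) (bList α) rfl
      (fun n => by rw [bList_succ, (key n).2.2.2.2.1]) (fun n => by simp [Stage.b]) hb
    obtain ⟨γ, hγ, hγG⟩ := exists_limit_mem_G (fun n => (orbit α n).c) (cList α) rfl
      (fun n => by rw [cList_succ, (key n).2.2.2.2.2.2]) (fun n => (key n).2.2.1) hc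
    exact ⟨β, γ, hβ, hγ, hβG, hγG⟩

end ShulgaPaper
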